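/- Let q_n = ⌊n/3⌋ and E_n = 2^{−n} ∑_{σ∈{±1}^n} ν_max(σ). Then q_n − E_n → 0 as n → ∞; equivalently, (1/2^{n−2}) ∑_{k=0}^{q_n−1} (q_n − k)·C(n,k) → 0 as n → ∞. -/

import Mathlib

namespace Napkin

variable {n q : ℕ}

/-- The napkin to the left of seat `s`; napkin `s` itself is the one to the right of
seat `s`, placed between seats `s` and `s + 1` around the circular table. -/
def leftNapkin (s : Fin n) : Fin n := ⟨((s : ℕ) + (n - 1)) % n, Nat.mod_lt _ s.pos⟩

/-- Process the diners `0, 1, …, n-1` in their arrival order.  Here `w i = j` means that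
diner `j` sits in seat `i` (so diner `j` sits in seat `w.symm j`), and `σ j = true`
means diner `j` prefers the napkin to their right.  Each diner takes their preferred
adjacent napkin if it is unclaimed, otherwise the other adjacent napkin if it is
unclaimed, and otherwise is napkinless.  The returned state consists of the set of
claimed napkins and the set of napkinless diners. -/
def dine (σ : Fin n → Bool) (w : Equiv.Perm (Fin n)) :
    Finset (Fin n) × Finset (Fin n) :=
  (List.finRange n).foldl
    (fun st j =>
      let s := w.symm j
      let pref := if σ j then s else leftNapkin s
      let other := if σ j then leftNapkin s else s
      if pref ∉ st.1 then (insert pref st.1, st.2)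
      else if other ∉ st.1 then (insert other st.1, st.2)
      else (st.1, insert j st.2))
    (∅, ∅)

/-- The set of napkinless diners for the seating arrangement `(w, σ)`. -/
def napkinless (σ : Fin n → Bool) (w : Equiv.Perm (Fin n)) : Finset (Fin n) :=
  (dine σ w).2

/-- `ν(w,σ)`, the number of napkinless diners. -/
def nu (σ : Fin n → Bool) (w : Equiv.Perm (Fin n)) : ℕ := (napkinless σ w).card

/-- A seating order puts diner `1` in seat `1` (index `0` here). -/
def IsSeating (w : Equiv.Perm (Fin n)) : Prop :=
  ∀ i : Fin n, (i : ℕ) = 0 → (w i : ℕ) = 0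

instance : DecidablePred (IsSeating (n := n)) := fun w =>
  decidable_of_iff (∀ i : Fin n, (i : ℕ) = 0 → (w i : ℕ) = 0) Iff.rfl

/-- `ν_max(σ)`, the maximal number of napkinless diners over all seating orders. -/
def nuMax (σ : Fin n → Bool) : ℕ :=
  (Finset.univ.filter fun w : Equiv.Perm (Fin n) => IsSeating w).sup (nu σ)

/-- The value `±1` of a napkin preference. -/
def sign (b : Bool) : ℤ := if b then 1 else -1

/-- The drift `h(σ) = max(0, max over prefixes of σ₁ + ⋯ + σᵢ)`. -/
def drift (σ : Fin n → Bool) : ℕ :=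
  (Finset.range (n + 1)).sup fun i =>
    (∑ j ∈ Finset.univ.filter (fun j : Fin n => (j : ℕ) < i), sign (σ j)).toNat

/-- A bench collection: `q` pairwise disjoint triples `aᵢ < bᵢ < cᵢ` in `{1,…,n}`. -/
structure BenchCollection (n q : ℕ) where
  a : Fin q → Fin n
  b : Fin q → Fin n
  c : Fin q → Fin n
  hab : ∀ i, a i < b i
  hbc : ∀ i, b i < c i
  disj : ∀ i j : Fin q, i ≠ j →
    Disjoint ({a i, b i, c i} : Finset (Fin n)) ({a j, b j, c j} : Finset (Fin n))

/-- A bench is balanced when its two smallest members have opposite preferences. -/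
def Balanced (σ : Fin n → Bool) (β : BenchCollection n q) (i : Fin q) : Prop :=
  sign (σ (β.a i)) + sign (σ (β.b i)) = 0

instance (σ : Fin n → Bool) (β : BenchCollection n q) :
    DecidablePred (Balanced σ β) := fun i =>
  decidable_of_iff (sign (σ (β.a i)) + sign (σ (β.b i)) = 0) Iff.rfl

/-- `b(β,σ)`, the number of balanced benches of `β`. -/
def balance (σ : Fin n → Bool) (β : BenchCollection n q) : ℕ :=
  (Finset.univ.filter fun i => Balanced σ β i).card

/-!
Counting claimed napkins gives `ν ≤ n / 3` for every seating order. Conversely, a balanced bench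
with last member `c` leaves `c` without a napkin: seat `c` between the other two members, each of
whom prefers the napkin shared with `c`. If neither preference ever leads the other by more than
`⌊n/3⌋` along `σ`, there are `⌊n/3⌋` disjoint balanced benches, hence `ν_max(σ) = ⌊n/3⌋`. So the
deficit `⌊n/3⌋ - E_n`, and likewise the binomial sum, is at most a constant times `⌊n/3⌋` times
the probability that the random walk `σ₁ + ⋯ + σᵢ` exceeds `⌊n/3⌋`, which is exponentially small.
-/

section

open Finset

/-! ### The arrival process -/

/-- The state after diner `j` arrives in state `st`: one step of the fold defining `dine`. -/
def serve (σ : Fin n → Bool) (w : Equiv.Perm (Fin n)) (st : Finset (Fin n) × Finset (Fin n))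
    (j : Fin n) : Finset (Fin n) × Finset (Fin n) :=
  let s := w.symm j
  let pref := if σ j then s else leftNapkin s
  let other := if σ j then leftNapkin s else s
  if pref ∉ st.1 then (insert pref st.1, st.2)
  else if other ∉ st.1 then (insert other st.1, st.2)
  else (st.1, insert j st.2)

/-- The claimed napkins and the napkinless diners once the first `k` diners have arrived. -/
def stateAfter (σ : Fin n → Bool) (w : Equiv.Perm (Fin n)) (k : ℕ) :
    Finset (Fin n) × Finset (Fin n) :=
  ((List.finRange n).take k).foldl (serve σ w) (∅, ∅)

variable {σ : Fin n → Bool} {w : Equiv.Perm (Fin n)}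

lemma stateAfter_eq_dine {k : ℕ} (hk : n ≤ k) : stateAfter σ w k = dine σ w := by
  rw [stateAfter, List.take_of_length_le (by simpa using hk)]
  rfl

lemma stateAfter_succ {k : ℕ} (hk : k < n) :
    stateAfter σ w (k + 1) = serve σ w (stateAfter σ w k) ⟨k, hk⟩ := by
  rw [stateAfter, List.take_succ_eq_append_getElem (by simpa using hk), List.foldl_append]
  simp [stateAfter]

lemma leftNapkin_eq_sub_one [NeZero n] (s : Fin n) : leftNapkin s = s - 1 := by
  have hn : n = 1 ∨ 1 < n := by have := NeZero.pos n; omega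
  rcases hn with rfl | hn
  · exact Subsingleton.elim _ _
  · ext
    simp only [leftNapkin, Fin.sub_def, Fin.val_one', Nat.mod_eq_of_lt hn, add_comm]

lemma leftNapkin_injective : Function.Injective (leftNapkin (n := n)) := by
  intro s t h
  have : NeZero n := ⟨s.pos.ne'⟩
  simpa only [leftNapkin_eq_sub_one, sub_left_inj] using h

variable (σ w) in
lemma serve_eq_claim_or_starve (st : Finset (Fin n) × Finset (Fin n)) (j : Fin n) :
    (∃ x ∉ st.1, (x = w.symm j ∨ x = leftNapkin (w.symm j)) ∧
      serve σ w st j = (insert x st.1, st.2)) ∨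
    (w.symm j ∈ st.1 ∧ leftNapkin (w.symm j) ∈ st.1 ∧ serve σ w st j = (st.1, insert j st.2)) := by
  grind [serve]

lemma preferred_mem_serve (st : Finset (Fin n) × Finset (Fin n)) (j : Fin n) :
    (if σ j then w.symm j else leftNapkin (w.symm j)) ∈ (serve σ w st j).1 := by
  by_cases hs : w.symm j ∈ st.1 <;> by_cases hl : leftNapkin (w.symm j) ∈ st.1 <;>
    cases hσ : σ j <;> simp [serve, hs, hl, hσ]

lemma le_serve (st : Finset (Fin n) × Finset (Fin n)) (j : Fin n) : st ≤ serve σ w st j := by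
  rcases serve_eq_claim_or_starve σ w st j with ⟨x, -, -, h⟩ | ⟨-, -, h⟩
  · exact h ▸ ⟨subset_insert x st.1, subset_rfl⟩
  · exact h ▸ ⟨subset_rfl, subset_insert j st.2⟩

lemma stateAfter_monotone : Monotone (stateAfter σ w) := by
  refine monotone_nat_of_le_succ fun k => ?_
  by_cases hk : k < n
  · rw [stateAfter_succ hk]
    exact le_serve _ _
  · rw [stateAfter_eq_dine (by omega), stateAfter_eq_dine (by omega)]

/-! ### At most a third of the diners go without -/

/-- What holds of the claimed napkins and the napkinless diners `st` after `k` arrivals: the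
invariant behind `nu_le`. A napkin that is no longer on the table was taken by one of the two
diners next to it, who is therefore not napkinless. -/
structure IsServiceState (w : Equiv.Perm (Fin n)) (k : ℕ)
    (st : Finset (Fin n) × Finset (Fin n)) : Prop where
  card_add_card : #st.1 + #st.2 = k
  lt_of_napkinless : ∀ j ∈ st.2, (j : ℕ) < k
  claimed_of_napkinless : ∀ j ∈ st.2, w.symm j ∈ st.1 ∧ leftNapkin (w.symm j) ∈ st.1
  exists_claimant : ∀ x ∈ st.1, ∃ j : Fin n, (j : ℕ) < k ∧ j ∉ st.2 ∧
    (x = w.symm j ∨ x = leftNapkin (w.symm j))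

lemma IsServiceState.after_serve {st : Finset (Fin n) × Finset (Fin n)} {j : Fin n}
    (h : IsServiceState w j st) : IsServiceState w (j + 1) (serve σ w st j) := by
  have hj : j ∉ st.2 := fun hmem => (h.lt_of_napkinless j hmem).false
  rcases serve_eq_claim_or_starve σ w st j with ⟨x, hx, hadj, hst⟩ | ⟨hright, hleft, hst⟩
  · rw [hst]
    refine ⟨?_, fun i hi => (h.lt_of_napkinless i hi).trans j.1.lt_succ_self, fun i hi => ?_,
      fun y hy => ?_⟩
    · rw [card_insert_of_notMem hx, add_right_comm, h.card_add_card]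
    · exact (h.claimed_of_napkinless i hi).imp mem_insert_of_mem mem_insert_of_mem
    · rcases mem_insert.1 hy with rfl | hy
      · exact ⟨j, j.1.lt_succ_self, hj, hadj⟩
      · obtain ⟨i, hik, hi⟩ := h.exists_claimant y hy
        exact ⟨i, hik.trans j.1.lt_succ_self, hi⟩
  · rw [hst]
    refine ⟨?_, fun i hi => ?_, fun i hi => ?_, fun y hy => ?_⟩
    · rw [card_insert_of_notMem hj, ← add_assoc, h.card_add_card]
    · rcases mem_insert.1 hi with rfl | hi
      · exact i.1.lt_succ_self
      · exact (h.lt_of_napkinless i hi).trans j.1.lt_succ_self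
    · rcases mem_insert.1 hi with rfl | hi
      · exact ⟨hright, hleft⟩
      · exact h.claimed_of_napkinless i hi
    · obtain ⟨i, hij, hi, hadj⟩ := h.exists_claimant y hy
      refine ⟨i, hij.trans j.1.lt_succ_self, ?_, hadj⟩
      simpa only [mem_insert, not_or] using ⟨fun hij' => hij.ne (congrArg Fin.val hij'), hi⟩

lemma isServiceState_stateAfter {k : ℕ} (hk : k ≤ n) :
    IsServiceState w k (stateAfter σ w k) := by
  induction k with
  | zero => constructor <;> simp [stateAfter]
  | succ k ih =>
    rw [stateAfter_succ hk]
    exact (ih (by omega)).after_serve (j := ⟨k, hk⟩)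

/-- A claimed napkin cannot have napkinless diners on both sides, so the `2ν` napkins around the
`ν` napkinless diners are distinct, whereas only `n - ν` napkins are ever claimed. -/
theorem nu_le (σ : Fin n → Bool) (w : Equiv.Perm (Fin n)) : nu σ w ≤ n / 3 := by
  have hst : IsServiceState w n (dine σ w) := by
    rw [← stateAfter_eq_dine le_rfl]
    exact isServiceState_stateAfter le_rfl
  set claimed := (dine σ w).1
  set right := (napkinless σ w).image w.symm
  set left := (napkinless σ w).image (leftNapkin ∘ w.symm)
  have hcard_right : #right = nu σ w := card_image_of_injective _ w.symm.injective
  have hcard_left : #left = nu σ w :=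
    card_image_of_injective _ (leftNapkin_injective.comp w.symm.injective)
  have hdisj : Disjoint right left := by
    refine disjoint_left.2 fun x hx_right hx_left => ?_
    obtain ⟨j, hj, hjx⟩ := mem_image.1 hx_right
    obtain ⟨i, hi, hix⟩ := mem_image.1 hx_left
    have hx : x ∈ claimed := hjx ▸ (hst.claimed_of_napkinless j hj).1
    obtain ⟨m, -, hm, hmx | hmx⟩ := hst.exists_claimant x hx
    · exact hm (w.symm.injective (hjx.trans hmx) ▸ hj)
    · exact hm (w.symm.injective (leftNapkin_injective (hix.trans hmx)) ▸ hi)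
  have hsub : right ∪ left ⊆ claimed :=
    union_subset (image_subset_iff.2 fun j hj => (hst.claimed_of_napkinless j hj).1)
      (image_subset_iff.2 fun j hj => (hst.claimed_of_napkinless j hj).2)
  have htwice : nu σ w + nu σ w ≤ #claimed := by
    simpa only [card_union_of_disjoint hdisj, hcard_right, hcard_left] using card_le_card hsub
  have htotal : #claimed + nu σ w = n := hst.card_add_card
  omega

/-! ### Seats whose occupant is starved -/

/-- Both neighbours of seat `s` arrive before its occupant, and each of them prefers the napkin
they share with seat `s`. -/
def IsStarvedSeat [NeZero n] (σ : Fin n → Bool) (w : Equiv.Perm (Fin n)) (s : Fin n) : Prop :=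
  (σ (w (s - 1)) = true ∧ w (s - 1) < w s) ∧ (σ (w (s + 1)) = false ∧ w (s + 1) < w s)

variable (σ w) in
lemma preferred_mem_stateAfter {i j : Fin n} (hij : i < j) :
    (if σ i then w.symm i else leftNapkin (w.symm i)) ∈ (stateAfter σ w j).1 := by
  refine (stateAfter_monotone (Nat.succ_le_of_lt hij)).1 ?_
  rw [Nat.succ_eq_add_one, stateAfter_succ i.2]
  exact preferred_mem_serve _ i

lemma mem_napkinless_of_claimed {j : Fin n} (hright : w.symm j ∈ (stateAfter σ w j).1)
    (hleft : leftNapkin (w.symm j) ∈ (stateAfter σ w j).1) : j ∈ napkinless σ w := by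
  rw [napkinless, ← stateAfter_eq_dine le_rfl]
  refine (stateAfter_monotone (Nat.succ_le_of_lt j.2)).2 ?_
  rw [Nat.succ_eq_add_one, stateAfter_succ j.2]
  cases hσ : σ j <;> simp [serve, hright, hleft, hσ]

lemma IsStarvedSeat.mem_napkinless [NeZero n] {s : Fin n} (h : IsStarvedSeat σ w s) :
    w s ∈ napkinless σ w := by
  obtain ⟨⟨hpref_left, hlt_left⟩, hpref_right, hlt_right⟩ := h
  apply mem_napkinless_of_claimed
  · simpa [hpref_right, leftNapkin_eq_sub_one] using preferred_mem_stateAfter σ w hlt_right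
  · simpa [hpref_left, leftNapkin_eq_sub_one] using preferred_mem_stateAfter σ w hlt_left

lemma card_le_nu [NeZero n] {S : Finset (Fin n)} (hS : ∀ s ∈ S, IsStarvedSeat σ w s) :
    #S ≤ nu σ w := by
  rw [← card_map w.toEmbedding]
  refine card_le_card fun x hx => ?_
  obtain ⟨s, hs, rfl⟩ := mem_map.1 hx
  exact (hS s hs).mem_napkinless

lemma isStarvedSeat_rotate [NeZero n] {k s : Fin n} :
    IsStarvedSeat σ ((Equiv.addRight k).trans w) s ↔ IsStarvedSeat σ w (s + k) := by
  simp only [IsStarvedSeat, Equiv.trans_apply, Equiv.coe_addRight, add_right_comm,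
    sub_add_eq_add_sub]

/-- The arrangement `w` need not be a seating order: the table can be turned until diner `0` sits
in seat `0`. -/
lemma card_le_nuMax [NeZero n] {S : Finset (Fin n)} (hS : ∀ s ∈ S, IsStarvedSeat σ w s) :
    #S ≤ nuMax σ := by
  set k := w.symm 0 with hk
  have hseating : IsSeating ((Equiv.addRight k).trans w) := by
    intro i hi
    obtain rfl : i = 0 := Fin.ext hi
    simp [hk]
  have hstarved : ∀ s ∈ S.map (Equiv.addRight (-k)).toEmbedding,
      IsStarvedSeat σ ((Equiv.addRight k).trans w) s := by
    intro s hs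
    obtain ⟨t, ht, rfl⟩ := mem_map.1 hs
    simpa [isStarvedSeat_rotate] using hS t ht
  calc #S = #(S.map (Equiv.addRight (-k)).toEmbedding) := (card_map _).symm
    _ ≤ nu σ ((Equiv.addRight k).trans w) := card_le_nu hstarved
    _ ≤ nuMax σ := le_sup (f := nu σ) (mem_filter.2 ⟨mem_univ _, hseating⟩)

/-! ### Seating the benches -/

/-- The members of bench `i` in the order in which they sit at the table: the last to arrive is in
the middle, and `a i`, `b i` are on the sides from which a balanced bench starves the middle. -/
def BenchCollection.occupant (β : BenchCollection n q) (σ : Fin n → Bool) (i : Fin q) :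
    Fin 3 → Fin n :=
  if σ (β.a i) then ![β.a i, β.c i, β.b i] else ![β.b i, β.c i, β.a i]

lemma BenchCollection.occupant_mem (β : BenchCollection n q) (i : Fin q) (k : Fin 3) :
    β.occupant σ i k ∈ ({β.a i, β.b i, β.c i} : Finset (Fin n)) := by
  fin_cases k <;> by_cases h : σ (β.a i) <;> simp [occupant, h]

lemma BenchCollection.occupant_injective (β : BenchCollection n q) (σ : Fin n → Bool) :
    Function.Injective fun x : Fin q × Fin 3 => β.occupant σ x.1 x.2 := by
  rintro ⟨i, k⟩ ⟨j, l⟩ h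
  dsimp only at h
  obtain rfl : i = j := by
    by_contra hij
    exact disjoint_left.1 (β.disj i j hij) (β.occupant_mem i k) (h ▸ β.occupant_mem j l)
  have hab := β.hab i
  have hbc := β.hbc i
  have hac := hab.trans hbc
  have hk : k = l := by
    by_cases hσ : σ (β.a i) <;> fin_cases k <;> fin_cases l <;>
      simp_all [occupant, hab.ne, hab.ne', hbc.ne, hbc.ne', hac.ne, hac.ne']
  rw [hk]

lemma BenchCollection.occupant_of_balanced {β : BenchCollection n q} {i : Fin q}
    (h : Balanced σ β i) :
    (σ (β.occupant σ i 0) = true ∧ β.occupant σ i 0 < β.occupant σ i 1) ∧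
      (σ (β.occupant σ i 2) = false ∧ β.occupant σ i 2 < β.occupant σ i 1) := by
  have hbc := β.hbc i
  have hac := (β.hab i).trans hbc
  cases ha : σ (β.a i) <;> cases hb : σ (β.b i) <;> simp_all [Balanced, sign, occupant]

/-- Seat number `k` of the `i`-th block of three consecutive seats. -/
def benchSeat (hq : q * 3 ≤ n) (i : Fin q) (k : Fin 3) : Fin n :=
  Fin.castLE hq (finProdFinEquiv (i, k))

lemma benchSeat_injective (hq : q * 3 ≤ n) (k : Fin 3) :
    Function.Injective fun i => benchSeat hq i k := by
  intro i j h
  simpa [benchSeat] using h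

lemma benchSeat_add_one [NeZero n] (hq : q * 3 ≤ n) (i : Fin q) (k : Fin 2) :
    benchSeat hq i k.castSucc + 1 = benchSeat hq i k.succ := by
  have hi := i.2
  have hk := k.2
  have hn : 1 < n := by omega
  ext
  rw [Fin.val_add, Fin.val_one', Nat.mod_eq_of_lt hn]
  simp only [benchSeat, Fin.val_castLE, finProdFinEquiv_apply_val, Fin.val_castSucc, Fin.val_succ]
  rw [Nat.mod_eq_of_lt (by omega), add_right_comm]

theorem balance_le_nuMax (σ : Fin n → Bool) (β : BenchCollection n q) :
    balance σ β ≤ nuMax σ := by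
  have hq : q * 3 ≤ n := by
    simpa using Fintype.card_le_of_injective _ (β.occupant_injective σ)
  rcases n.eq_zero_or_pos with rfl | hn
  · obtain rfl : q = 0 := by omega
    simp [balance]
  have : NeZero n := ⟨hn.ne'⟩
  have := Equiv.Perm.isMultiplyPretransitive (Fin n) (q * 3)
  obtain ⟨w, hw⟩ := MulAction.exists_smul_eq (Equiv.Perm (Fin n)) (Fin.castLEEmb hq)
    (finProdFinEquiv.symm.toEmbedding.trans ⟨_, β.occupant_injective σ⟩)
  have hseat (i : Fin q) (k : Fin 3) : w (benchSeat hq i k) = β.occupant σ i k := by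
    simpa [benchSeat] using DFunLike.congr_fun hw (finProdFinEquiv (i, k))
  set S := (univ.filter (Balanced σ β)).image fun i => benchSeat hq i 1
  have hstarved : ∀ s ∈ S, IsStarvedSeat σ w s := by
    intro s hs
    obtain ⟨i, hi, rfl⟩ := mem_image.1 hs
    have hsucc : benchSeat hq i 1 + 1 = benchSeat hq i 2 := benchSeat_add_one hq i 1
    have hpred : benchSeat hq i 1 - 1 = benchSeat hq i 0 :=
      sub_eq_of_eq_add (benchSeat_add_one hq i 0).symm
    simpa only [IsStarvedSeat, hsucc, hpred, hseat] using
      BenchCollection.occupant_of_balanced (mem_filter.1 hi).2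
  calc balance σ β = #S := (card_image_of_injective _ (benchSeat_injective hq 1)).symm
    _ ≤ nuMax σ := card_le_nuMax hstarved

/-! ### Balanced benches from small drift -/

section OrderEmb

variable {α : Type*} [LinearOrder α] {k : ℕ}

lemma mem_range_orderEmbOfCardLe {s : Finset α} (h : k ≤ #s) {i : Fin k} {x : α} (hx : x ∈ s)
    (hxi : x ≤ s.orderEmbOfCardLe h i) : x ∈ Set.range (s.orderEmbOfCardLe h) := by
  obtain ⟨l, rfl⟩ : x ∈ Set.range (s.orderEmbOfFin rfl) := by rwa [range_orderEmbOfFin]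
  have hli : l ≤ Fin.castLE h i := (s.orderEmbOfFin rfl).le_iff_le.1 hxi
  exact ⟨⟨l, lt_of_le_of_lt hli i.2⟩, rfl⟩

lemma card_filter_lt_orderEmbOfCardLe (s : Finset α) (h : k ≤ #s) (i : Fin k) :
    #{x ∈ s | x < s.orderEmbOfCardLe h i} = i := by
  have heq : {x ∈ s | x < s.orderEmbOfCardLe h i} =
      (Iio i).map (s.orderEmbOfCardLe h).toEmbedding := by
    ext x
    simp only [mem_filter, mem_map, mem_Iio, RelEmbedding.coe_toEmbedding]
    constructor
    · rintro ⟨hx, hxi⟩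
      obtain ⟨l, rfl⟩ := mem_range_orderEmbOfCardLe h hx hxi.le
      exact ⟨l, (OrderEmbedding.lt_iff_lt _).1 hxi, rfl⟩
    · rintro ⟨l, hli, rfl⟩
      exact ⟨s.orderEmbOfCardLe_mem h l, (OrderEmbedding.lt_iff_lt _).2 hli⟩
  rw [heq, card_map, Fin.card_Iio]

/-- Suppose instead that `c i < b i`. Then at most `i` elements of `B` have appeared up to `c i`,
and the leftovers `c 0, …, c i` all belong to `A`, hence come after all of the first `k` elements
of `A`: up to `c i` the set `A` leads by at least `k + 1`. -/
lemma orderEmbOfCardLe_lt_of_leftover {A B R : Finset α} (hA : k ≤ #A) (hB : k ≤ #B) (hR : k ≤ #R)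
    (hleftover : ∀ x ∈ R, (x ∈ A ∨ x ∈ B) ∧ x ∉ Set.range (A.orderEmbOfCardLe hA) ∧
      x ∉ Set.range (B.orderEmbOfCardLe hB))
    (hlead : ∀ t, #{x ∈ A | x ≤ t} ≤ #{x ∈ B | x ≤ t} + k) (i : Fin k) :
    B.orderEmbOfCardLe hB i < R.orderEmbOfCardLe hR i := by
  set a := A.orderEmbOfCardLe hA
  set b := B.orderEmbOfCardLe hB
  set c := R.orderEmbOfCardLe hR
  by_contra! hcb
  have hc (l : Fin k) := hleftover (c l) (R.orderEmbOfCardLe_mem hR l)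
  have hcb' : c i < b i := hcb.lt_of_ne fun heq => (hc i).2.2 ⟨i, heq.symm⟩
  have hcA : ∀ l ≤ i, c l ∈ A := fun l hl => (hc l).1.resolve_right fun hcB =>
    (hc l).2.2 (mem_range_orderEmbOfCardLe hB hcB ((c.monotone hl).trans hcb))
  have hac (l : Fin k) : a l < c i := by
    by_contra! hca
    exact (hc i).2.1 (mem_range_orderEmbOfCardLe hA (hcA i le_rfl) hca)
  have hcardB : #{x ∈ B | x ≤ c i} ≤ i := by
    rw [← card_filter_lt_orderEmbOfCardLe B hB i]
    exact card_le_card (monotone_filter_right B fun x _ hx => hx.trans_lt hcb')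
  have hdisj : Disjoint (univ.image a) ((Iic i).image c) := by
    refine disjoint_left.2 fun x hxa hxc => ?_
    obtain ⟨m, -, rfl⟩ := mem_image.1 hxa
    obtain ⟨l, -, hl⟩ := mem_image.1 hxc
    exact (hc l).2.1 ⟨m, hl.symm⟩
  have hsub : univ.image a ∪ (Iic i).image c ⊆ {x ∈ A | x ≤ c i} :=
    union_subset
      (image_subset_iff.2 fun l _ => mem_filter.2 ⟨A.orderEmbOfCardLe_mem hA l, (hac l).le⟩)
      (image_subset_iff.2 fun l hl =>
        mem_filter.2 ⟨hcA l (mem_Iic.1 hl), c.monotone (mem_Iic.1 hl)⟩)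
  have hcardA : k + (i + 1) ≤ #{x ∈ A | x ≤ c i} := by
    simpa [card_union_of_disjoint hdisj, card_image_of_injective _ a.injective,
      card_image_of_injective _ c.injective] using card_le_card hsub
  have := hlead (c i)
  omega

lemma exists_embeddings_lt {A B : Finset α} (hAB : Disjoint A B) (hA : k ≤ #A) (hB : k ≤ #B)
    (hcard : 3 * k ≤ #A + #B) (hlead : ∀ t, #{x ∈ A | x ≤ t} ≤ #{x ∈ B | x ≤ t} + k)
    (hlead' : ∀ t, #{x ∈ B | x ≤ t} ≤ #{x ∈ A | x ≤ t} + k) :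
    ∃ a b c : Fin k ↪ α, (∀ i, a i ∈ A) ∧ (∀ i, b i ∈ B) ∧ (∀ i j, a i ≠ c j) ∧
      (∀ i j, b i ≠ c j) ∧ (∀ i, a i < c i) ∧ ∀ i, b i < c i := by
  set a := A.orderEmbOfCardLe hA
  set b := B.orderEmbOfCardLe hB
  set R := (A ∪ B) \ (univ.image a ∪ univ.image b) with hR_def
  have hleftover : ∀ x ∈ R, (x ∈ A ∨ x ∈ B) ∧ x ∉ Set.range a ∧ x ∉ Set.range b :=
    fun x hx => by simpa [hR_def, not_or] using hx
  have hR : k ≤ #R := by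
    have hused : #(univ.image a ∪ univ.image b) ≤ k + k := by
      refine (card_union_le _ _).trans (add_le_add ?_ ?_) <;> exact card_image_le.trans (by simp)
    have htotal := le_card_sdiff (univ.image a ∪ univ.image b) (A ∪ B)
    rw [card_union_of_disjoint hAB, ← hR_def] at htotal
    omega
  set c := R.orderEmbOfCardLe hR
  have hc (j : Fin k) := (hleftover (c j) (R.orderEmbOfCardLe_mem hR j)).2
  have hbc : ∀ i, b i < c i := orderEmbOfCardLe_lt_of_leftover hA hB hR hleftover hlead
  have hac : ∀ i, a i < c i := orderEmbOfCardLe_lt_of_leftover hB hA hR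
    (fun x hx => (hleftover x hx).imp Or.symm And.symm) hlead'
  exact ⟨a.toEmbedding, b.toEmbedding, c.toEmbedding, A.orderEmbOfCardLe_mem hA,
    B.orderEmbOfCardLe_mem hB, fun i j hij => (hc j).1 ⟨i, hij⟩,
    fun i j hij => (hc j).2 ⟨i, hij⟩, hac, hbc⟩

end OrderEmb

/-- The diners with preference `b`. -/
def preferring (σ : Fin n → Bool) (b : Bool) : Finset (Fin n) := {j | σ j = b}

lemma card_preferring_add (σ : Fin n → Bool) :
    #(preferring σ true) + #(preferring σ false) = n := by
  simpa [preferring] using card_filter_add_card_filter_not (s := univ) fun j => σ j = true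

lemma sum_sign_eq (σ : Fin n → Bool) (p : Fin n → Prop) [DecidablePred p] :
    ∑ j with p j, sign (σ j) =
      (#{j ∈ preferring σ true | p j} : ℤ) - #{j ∈ preferring σ false | p j} := by
  simp only [sign, sum_ite, sum_const, preferring, filter_comm p, filter_filter,
    Bool.not_eq_true, nsmul_eq_mul]
  simp [sub_eq_add_neg, and_comm]

lemma drift_le_iff : drift σ ≤ q ↔ ∀ i ≤ n, ∑ j with (j : Fin n).1 < i, sign (σ j) ≤ q := by
  simp [drift]

lemma card_preferring_le_of_drift_le (h : drift σ ≤ q) {i : ℕ} (hi : i ≤ n) :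
    #{j ∈ preferring σ true | j.1 < i} ≤ #{j ∈ preferring σ false | j.1 < i} + q := by
  have := drift_le_iff.1 h i hi
  rw [sum_sign_eq] at this
  omega

lemma card_preferring_true_le (h : drift σ ≤ q) :
    #(preferring σ true) ≤ #(preferring σ false) + q := by
  simpa using card_preferring_le_of_drift_le h le_rfl

lemma card_preferring_le_le (h : drift σ ≤ q) (t : Fin n) :
    #{j ∈ preferring σ true | j ≤ t} ≤ #{j ∈ preferring σ false | j ≤ t} + q := by
  simpa only [Nat.lt_succ_iff, Fin.val_fin_le] using card_preferring_le_of_drift_le h t.2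

lemma preferring_not (σ : Fin n → Bool) (b : Bool) :
    preferring (fun j => !σ j) b = preferring σ (!b) := by
  ext j
  cases b <;> simp [preferring]


/-- The benches formed by the pairs `a i`, `b i` together with the later diners `c i`. -/
def BenchCollection.ofPairs (a b c : Fin q ↪ Fin n) (hab : ∀ i j, a i ≠ b j)
    (hac : ∀ i j, a i ≠ c j) (hbc : ∀ i j, b i ≠ c j) (hac_lt : ∀ i, a i < c i)
    (hbc_lt : ∀ i, b i < c i) : BenchCollection n q where
  a i := min (a i) (b i)
  b i := max (a i) (b i)
  c := c
  hab i := min_lt_max.2 (hab i i)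
  hbc i := max_lt (hac_lt i) (hbc_lt i)
  disj i j hij := by
    have hmembers (i : Fin q) :
        ({min (a i) (b i), max (a i) (b i), c i} : Finset (Fin n)) = {a i, b i, c i} := by
      rcases le_total (a i) (b i) with h | h
      · rw [min_eq_left h, max_eq_right h]
      · rw [min_eq_right h, max_eq_left h, insert_comm]
    simp only [hmembers, disjoint_insert_left, disjoint_singleton_left, mem_insert, mem_singleton,
      not_or]
    exact ⟨⟨a.injective.ne hij, hab i j, hac i j⟩,
      ⟨(hab j i).symm, b.injective.ne hij, hbc i j⟩,
      ⟨(hac j i).symm, (hbc j i).symm, c.injective.ne hij⟩⟩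

theorem exists_balance_eq (hq : 3 * q ≤ n) (h : drift σ ≤ q) (h' : drift (fun j => !σ j) ≤ q) :
    ∃ β : BenchCollection n q, balance σ β = q := by
  have hcard := card_preferring_add σ
  have htrue := card_preferring_true_le h
  have hfalse : #(preferring σ false) ≤ #(preferring σ true) + q := by
    simpa [preferring_not] using card_preferring_true_le h'
  have hdisj : Disjoint (preferring σ true) (preferring σ false) :=
    disjoint_filter.2 fun j _ ht hf => by simp [ht] at hf
  obtain ⟨a, b, c, ha, hb, hac, hbc, hac_lt, hbc_lt⟩ :=
    exists_embeddings_lt hdisj (by omega) (by omega) (hcard.symm ▸ hq) (card_preferring_le_le h)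
      (by simpa [preferring_not] using card_preferring_le_le h')
  replace ha (i : Fin q) : σ (a i) = true := (mem_filter.1 (ha i)).2
  replace hb (i : Fin q) : σ (b i) = false := (mem_filter.1 (hb i)).2
  have hab (i j : Fin q) : a i ≠ b j := fun hij => by simpa [ha, hb] using congrArg σ hij
  refine ⟨.ofPairs a b c hab hac hbc hac_lt hbc_lt, ?_⟩
  have hbalanced (i : Fin q) : sign (σ (min (a i) (b i))) + sign (σ (max (a i) (b i))) = 0 := by
    rcases le_total (a i) (b i) with hle | hle <;> simp [hle, ha, hb, sign]
  rw [balance, filter_true_of_mem fun i _ => ?_, card_univ, Fintype.card_fin]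
  exact hbalanced i

theorem nuMax_le (σ : Fin n → Bool) : nuMax σ ≤ n / 3 :=
  Finset.sup_le fun w _ => nu_le σ w

theorem nuMax_eq_of_drift_le (h : drift σ ≤ n / 3) (h' : drift (fun j => !σ j) ≤ n / 3) :
    nuMax σ = n / 3 := by
  obtain ⟨β, hβ⟩ := exists_balance_eq (Nat.mul_div_le n 3) h h'
  exact (nuMax_le σ).antisymm (hβ ▸ balance_le_nuMax σ β)

/-! ### The drift of a random preference order -/

lemma zpow_sum₀ {ι M : Type*} [CommGroupWithZero M] {x : M} (hx : x ≠ 0) (s : Finset ι)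
    (f : ι → ℤ) : x ^ ∑ j ∈ s, f j = ∏ j ∈ s, x ^ f j := by
  induction s using Finset.cons_induction with
  | empty => simp
  | cons j s hj ih => rw [sum_cons, prod_cons, zpow_add₀ hx, ih]

lemma sum_two_zpow_sum_sign_le {ι : Type*} [Fintype ι] [DecidableEq ι] (p : ι → Prop)
    [DecidablePred p] :
    ∑ σ : ι → Bool, (2 : ℝ) ^ ∑ j with p j, sign (σ j) ≤ (5 / 2) ^ Fintype.card ι := by
  calc ∑ σ : ι → Bool, (2 : ℝ) ^ ∑ j with p j, sign (σ j)
      = ∑ σ : ι → Bool, ∏ j, if p j then (2 : ℝ) ^ sign (σ j) else 1 := by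
        simp only [zpow_sum₀ (two_ne_zero' ℝ), prod_filter]
    _ = ∏ j, ∑ b, if p j then (2 : ℝ) ^ sign b else 1 :=
        (Fintype.prod_sum fun j b => if p j then (2 : ℝ) ^ sign b else 1).symm
    _ ≤ ∏ _j : ι, (5 / 2 : ℝ) := by
        refine prod_le_prod (fun j _ => ?_) fun j _ => ?_
        · positivity
        · by_cases hj : p j <;> norm_num [hj, sign]
    _ = (5 / 2) ^ Fintype.card ι := by rw [prod_const, card_univ]

variable (σ) in
lemma two_pow_drift_le :
    (2 : ℝ) ^ drift σ ≤ ∑ i ∈ range (n + 1), (2 : ℝ) ^ ∑ j with (j : Fin n).1 < i, sign (σ j) := by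
  have hterm : ∀ i ∈ range (n + 1), (2 : ℝ) ^ ∑ j with (j : Fin n).1 < i, sign (σ j) ≤
      ∑ i ∈ range (n + 1), (2 : ℝ) ^ ∑ j with (j : Fin n).1 < i, sign (σ j) :=
    fun i hi => single_le_sum (f := fun i => (2 : ℝ) ^ ∑ j with (j : Fin n).1 < i, sign (σ j))
      (fun _ _ => by positivity) hi
  obtain ⟨i, hi, hdrift⟩ := exists_mem_eq_sup (range (n + 1)) nonempty_range_add_one
    fun i => (∑ j with (j : Fin n).1 < i, sign (σ j)).toNat
  rw [drift, hdrift]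
  rcases le_total 0 (∑ j with (j : Fin n).1 < i, sign (σ j)) with hsum | hsum
  · rw [← zpow_natCast, Int.toNat_of_nonneg hsum]
    exact hterm i hi
  · rw [Int.toNat_of_nonpos hsum]
    simpa using hterm 0 (by simp)

lemma sum_two_pow_drift_le :
    ∑ σ : Fin n → Bool, (2 : ℝ) ^ drift σ ≤ (n + 1) * (5 / 2) ^ n := by
  calc ∑ σ : Fin n → Bool, (2 : ℝ) ^ drift σ
      ≤ ∑ σ : Fin n → Bool, ∑ i ∈ range (n + 1),
          (2 : ℝ) ^ ∑ j with (j : Fin n).1 < i, sign (σ j) :=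
        sum_le_sum fun σ _ => two_pow_drift_le σ
    _ = ∑ i ∈ range (n + 1), ∑ σ : Fin n → Bool,
          (2 : ℝ) ^ ∑ j with (j : Fin n).1 < i, sign (σ j) := sum_comm
    _ ≤ ∑ _i ∈ range (n + 1), (5 / 2 : ℝ) ^ n :=
        sum_le_sum fun i _ => by
          simpa using sum_two_zpow_sum_sign_le fun j : Fin n => j.1 < i
    _ = (n + 1) * (5 / 2) ^ n := by simp

/-- The probability that a uniformly random preference order of `n` diners has drift greater
than `q`. -/
noncomputable def driftTail (n q : ℕ) : ℝ := #{σ : Fin n → Bool | q < drift σ} / 2 ^ n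

lemma driftTail_nonneg (n q : ℕ) : 0 ≤ driftTail n q := by
  unfold driftTail
  positivity

/-- The Chernoff bound for `2 ^ drift σ`; the base `2` is good enough because `(5 / 4) ^ 3 < 2`. -/
lemma driftTail_le (n q : ℕ) : driftTail n q ≤ (n + 1) * (5 / 4) ^ n / 2 ^ q := by
  have hmarkov : (#{σ : Fin n → Bool | q < drift σ} : ℝ) * 2 ^ q ≤ (n + 1) * (5 / 2) ^ n := by
    calc (#{σ : Fin n → Bool | q < drift σ} : ℝ) * 2 ^ q
        ≤ ∑ σ : Fin n → Bool with q < drift σ, (2 : ℝ) ^ drift σ := by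
          rw [← nsmul_eq_mul]
          exact card_nsmul_le_sum _ _ _ fun σ hσ =>
            pow_le_pow_right₀ one_le_two (mem_filter.1 hσ).2.le
      _ ≤ ∑ σ : Fin n → Bool, (2 : ℝ) ^ drift σ :=
          sum_le_sum_of_subset_of_nonneg (subset_univ _) fun _ _ _ => by positivity
      _ ≤ (n + 1) * (5 / 2) ^ n := sum_two_pow_drift_le
  rw [driftTail, le_div_iff₀ (by positivity), div_mul_eq_mul_div, div_le_iff₀ (by positivity),
    mul_assoc, ← mul_pow]
  norm_num [hmarkov]

theorem tendsto_mul_driftTail :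
    Filter.Tendsto (fun n : ℕ => ((n / 3 : ℕ) : ℝ) * driftTail n (n / 3))
      Filter.atTop (nhds 0) := by
  set ρ : ℝ := 125 / 128 with hρ
  have hbound (n : ℕ) : ((n / 3 : ℕ) : ℝ) * driftTail n (n / 3) ≤
      75 / 16 * (((n / 3 : ℕ) : ℝ) ^ 2 * ρ ^ (n / 3) + ((n / 3 : ℕ) : ℝ) * ρ ^ (n / 3)) := by
    set r := n / 3
    have hn : (n : ℝ) + 1 ≤ 3 * (r + 1) := by
      have : n + 1 ≤ 3 * (r + 1) := by omega
      exact_mod_cast this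
    have hpow : (5 / 4 : ℝ) ^ n ≤ 25 / 16 * (ρ ^ r * 2 ^ r) := by
      calc (5 / 4 : ℝ) ^ n ≤ (5 / 4) ^ (2 + 3 * r) :=
            pow_le_pow_right₀ (by norm_num) (by omega)
        _ = 25 / 16 * (ρ ^ r * 2 ^ r) := by rw [pow_add, pow_mul, ← mul_pow]; norm_num [hρ]
    calc (r : ℝ) * driftTail n r ≤ r * ((n + 1) * (5 / 4) ^ n / 2 ^ r) := by
          gcongr
          exact driftTail_le n r
      _ ≤ r * (3 * (r + 1) * (25 / 16 * (ρ ^ r * 2 ^ r)) / 2 ^ r) := by gcongr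
      _ = 75 / 16 * ((r : ℝ) ^ 2 * ρ ^ r + r * ρ ^ r) := by field_simp; ring
  have hlim : Filter.Tendsto (fun r : ℕ => 75 / 16 * ((r : ℝ) ^ 2 * ρ ^ r + r * ρ ^ r))
      Filter.atTop (nhds 0) := by
    have hsq := tendsto_pow_const_mul_const_pow_of_lt_one 2 (r := ρ) (by norm_num) (by norm_num)
    have hlin := tendsto_self_mul_const_pow_of_lt_one (r := ρ) (by norm_num) (by norm_num)
    simpa using (hsq.add hlin).const_mul (75 / 16)
  exact squeeze_zero (fun n => mul_nonneg (Nat.cast_nonneg _) (driftTail_nonneg _ _)) hbound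
    (hlim.comp (Nat.tendsto_div_const_atTop three_ne_zero))


/-! ### Both quantities are controlled by the drift -/

lemma card_lt_drift_not (n q : ℕ) :
    #{σ : Fin n → Bool | q < drift fun j => !σ j} = #{σ : Fin n → Bool | q < drift σ} :=
  card_equiv (Equiv.piCongrRight fun _ => Equiv.boolNot) fun σ => by
    simp only [mem_filter_univ]
    rfl

theorem sub_average_nuMax_le (n : ℕ) :
    ((n / 3 : ℕ) : ℝ) - (∑ σ : Fin n → Bool, (nuMax σ : ℝ)) / 2 ^ n ≤
      2 * ((n / 3 : ℕ) * driftTail n (n / 3)) := by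
  set r := n / 3
  have hdeficit (σ : Fin n → Bool) : (r : ℝ) - nuMax σ ≤
      (if r < drift σ then (r : ℝ) else 0) + if r < drift (fun j => !σ j) then (r : ℝ) else 0 := by
    split_ifs with h h' h'
    · exact (sub_le_self _ (nuMax σ).cast_nonneg).trans (le_add_of_nonneg_left r.cast_nonneg)
    · simp
    · simp
    · rw [nuMax_eq_of_drift_le (not_lt.1 h) (not_lt.1 h')]
      simp [r]
  have hsum : ∑ σ : Fin n → Bool, ((r : ℝ) - nuMax σ) ≤
      2 * r * #{σ : Fin n → Bool | r < drift σ} := by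
    calc ∑ σ : Fin n → Bool, ((r : ℝ) - nuMax σ)
        ≤ ∑ σ : Fin n → Bool, ((if r < drift σ then (r : ℝ) else 0) +
            if r < drift (fun j => !σ j) then (r : ℝ) else 0) := sum_le_sum fun σ _ => hdeficit σ
      _ = 2 * r * #{σ : Fin n → Bool | r < drift σ} := by
          simp only [sum_add_distrib, ← sum_filter, sum_const, card_lt_drift_not, nsmul_eq_mul]
          ring
  have haverage : (r : ℝ) - (∑ σ : Fin n → Bool, (nuMax σ : ℝ)) / 2 ^ n =
      (∑ σ : Fin n → Bool, ((r : ℝ) - nuMax σ)) / 2 ^ n := by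
    simp [sum_sub_distrib, sub_div]
  rw [haverage, driftTail, div_le_iff₀ (by positivity)]
  refine hsum.trans_eq ?_
  field_simp

theorem average_nuMax_le (n : ℕ) :
    (∑ σ : Fin n → Bool, (nuMax σ : ℝ)) / 2 ^ n ≤ (n / 3 : ℕ) := by
  rw [div_le_iff₀ (by positivity)]
  calc ∑ σ : Fin n → Bool, (nuMax σ : ℝ) ≤ ∑ _σ : Fin n → Bool, ((n / 3 : ℕ) : ℝ) :=
        sum_le_sum fun σ _ => Nat.cast_le.2 (nuMax_le σ)
    _ = (n / 3 : ℕ) * 2 ^ n := by simp [mul_comm]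

lemma card_card_preferring_eq (n k : ℕ) (b : Bool) :
    #{σ : Fin n → Bool | #(preferring σ b) = k} = n.choose k := by
  rw [← card_fin n, ← card_powersetCard, card_fin]
  refine card_nbij' (preferring · b) (fun s j => if j ∈ s then b else !b) ?_ ?_ ?_ ?_
  · intro σ hσ
    simpa using hσ
  · intro s hs
    rw [mem_coe, mem_filter_univ]
    simpa [preferring] using hs
  · intro σ _
    ext j
    cases b <;> simp [preferring]
  · intro s _
    ext j
    simp [preferring]

/-- Fewer than `q` diners preferring the left make the final partial sum exceed `n - 2q ≥ q`. -/
lemma sum_choose_le_card_lt_drift (hq : 3 * q ≤ n) :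
    ∑ k ∈ range q, n.choose k ≤ #{σ : Fin n → Bool | q < drift σ} := by
  calc ∑ k ∈ range q, n.choose k
      = ∑ k ∈ range q, #{σ : Fin n → Bool | #(preferring σ false) = k} := by
        simp only [card_card_preferring_eq]
    _ = #{σ : Fin n → Bool | #(preferring σ false) < q} := by
        rw [card_eq_sum_card_fiberwise (f := fun σ => #(preferring σ false)) (t := range q)
          fun σ hσ => by simpa using hσ]
        refine sum_congr rfl fun k hk => ?_
        rw [filter_filter]
        refine congrArg card (filter_congr fun σ _ => (and_iff_right_of_imp ?_).symm)
        exact fun hσ => hσ.trans_lt (mem_range.1 hk)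
    _ ≤ #{σ : Fin n → Bool | q < drift σ} := by
        refine card_le_card (monotone_filter_right univ fun σ _ hσ => ?_)
        by_contra! hdrift
        have hlead := card_preferring_true_le hdrift
        have htotal := card_preferring_add σ
        omega

theorem choose_sum_le {n : ℕ} (hn : 2 ≤ n) :
    (1 / 2 ^ (n - 2) : ℝ) *
        ∑ k ∈ range (n / 3), (((n / 3 : ℕ) : ℝ) - (k : ℝ)) * (n.choose k : ℝ) ≤
      4 * ((n / 3 : ℕ) * driftTail n (n / 3)) := by
  set r := n / 3
  have htail : (∑ k ∈ range r, (n.choose k : ℝ)) ≤ #{σ : Fin n → Bool | r < drift σ} := by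
    exact_mod_cast sum_choose_le_card_lt_drift (Nat.mul_div_le n 3)
  have hsum : ∑ k ∈ range r, ((r : ℝ) - k) * n.choose k ≤
      r * #{σ : Fin n → Bool | r < drift σ} := by
    calc ∑ k ∈ range r, ((r : ℝ) - k) * n.choose k ≤ ∑ k ∈ range r, (r : ℝ) * n.choose k := by
          gcongr with k
          exact sub_le_self _ k.cast_nonneg
      _ ≤ r * #{σ : Fin n → Bool | r < drift σ} := by
          rw [← mul_sum]
          gcongr
  have hpow : (2 : ℝ) ^ n = 4 * 2 ^ (n - 2) := by
    rw [show (4 : ℝ) = 2 ^ 2 by norm_num, ← pow_add, Nat.add_sub_cancel' hn]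
  calc _ ≤ (1 / 2 ^ (n - 2) : ℝ) * (r * #{σ : Fin n → Bool | r < drift σ}) := by gcongr
    _ = 4 * (r * driftTail n r) := by
        rw [driftTail, hpow]
        field_simp

theorem choose_sum_nonneg (n : ℕ) :
    0 ≤ (1 / 2 ^ (n - 2) : ℝ) *
      ∑ k ∈ range (n / 3), (((n / 3 : ℕ) : ℝ) - (k : ℝ)) * (n.choose k : ℝ) := by
  refine mul_nonneg (by positivity) (sum_nonneg fun k hk => mul_nonneg ?_ (Nat.cast_nonneg _))
  exact sub_nonneg.2 (Nat.cast_le.2 (mem_range.1 hk).le)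

end

/-- With `q_n = ⌊n/3⌋` and `E_n = 2^{-n} ∑_σ ν_max(σ)`, we have
`q_n - E_n → 0` as `n → ∞`; equivalently
`2^{-(n-2)} ∑_{k<q_n} (q_n - k)·C(n,k) → 0`. -/
theorem statement16 :
    Filter.Tendsto
      (fun n : ℕ => ((n / 3 : ℕ) : ℝ) - (∑ σ : Fin n → Bool, (nuMax σ : ℝ)) / 2 ^ n)
      Filter.atTop (nhds 0) ∧
    Filter.Tendsto
      (fun n : ℕ => (1 / 2 ^ (n - 2) : ℝ) *
        ∑ k ∈ Finset.range (n / 3), (((n / 3 : ℕ) : ℝ) - (k : ℝ)) * (n.choose k : ℝ))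
      Filter.atTop (nhds 0) := by
  have htail := tendsto_mul_driftTail
  constructor
  · exact squeeze_zero (fun n => sub_nonneg.2 (average_nuMax_le n)) sub_average_nuMax_le
      (by simpa using htail.const_mul 2)
  · refine squeeze_zero' (.of_forall choose_sum_nonneg) ?_ (by simpa using htail.const_mul 4)
    filter_upwards [Filter.eventually_ge_atTop 2] with n hn using choose_sum_le hn

end Napkin
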